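/- Let P ⊆ Φ_{B_n} be a signed poset whose weight cone K^wt_P is pointed (contains no nonzero f with both f and −f in K^wt_P). Then: (a) K^wt_P equals the set of all nonnegative real linear combinations of the vectors χ_J, where J ranges over the connected nonextensible ideals of P; and (b) a nonzero v ∈ K^wt_P is an extreme vector of K^wt_P — meaning that whenever v = a + b with a, b ∈ K^wt_P, both a and b are nonnegative scalar multiples of v — if and only if v is a positive scalar multiple of χ_J for some connected nonextensible ideal J of P. -/

import Mathlib

open scoped Classical

noncomputable section

/-- Signed index set `±[n]`: `(true, i)` represents `+i`, `(false, i)` represents `-i`. -/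
abbrev SIdx (n : ℕ) := Bool × Fin n

/-- Negation `a ↦ -a` on `±[n]`. -/
def negS {n : ℕ} (a : SIdx n) : SIdx n := (!a.1, a.2)

/-- Standard basis vector `e_i` of `ℝ^n`. -/
def stdB (n : ℕ) (i : Fin n) : Fin n → ℝ := Pi.single i 1

/-- `rsgn true = 1`, `rsgn false = -1`. -/
def rsgn (s : Bool) : ℝ := if s then 1 else -1

/-- `v(a)` for `a ∈ ±[n]`: `v(+i) = e_i`, `v(-i) = -e_i`. -/
def vS {n : ℕ} (a : SIdx n) : Fin n → ℝ := rsgn a.1 • stdB n a.2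

/-- `v` on `±[n] ∪ {0}` (with `none` playing the role of `0`). -/
def vO {n : ℕ} : Option (SIdx n) → (Fin n → ℝ)
  | none => 0
  | some a => vS a

/-- Negation on `±[n] ∪ {0}`, fixing `0`. -/
def negO {n : ℕ} : Option (SIdx n) → Option (SIdx n)
  | none => none
  | some a => some (negS a)

/-- Standard inner product on `ℝ^n`. -/
def dotR {n : ℕ} (x y : Fin n → ℝ) : ℝ := ∑ i, x i * y i

/-- The type `B_n` root system `Φ_{B_n}`. -/
def BnRoots (n : ℕ) : Set (Fin n → ℝ) :=
  {α | (∃ i j : Fin n, i < j ∧ ∃ s t : Bool, α = rsgn s • stdB n i + rsgn t • stdB n j) ∨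
    ∃ i : Fin n, ∃ s : Bool, α = rsgn s • stdB n i}

/-- The positive roots `Φ⁺_{B_n}`. -/
def BnPos (n : ℕ) : Set (Fin n → ℝ) :=
  {α | (∃ i j : Fin n, i < j ∧ ∃ t : Bool, α = stdB n i + rsgn t • stdB n j) ∨
    ∃ i : Fin n, α = stdB n i}

/-- The type `C_n` root system `Φ_{C_n}`. -/
def CnRoots (n : ℕ) : Set (Fin n → ℝ) :=
  {α | (∃ i j : Fin n, i < j ∧ ∃ s t : Bool, α = rsgn s • stdB n i + rsgn t • stdB n j) ∨
    ∃ i : Fin n, ∃ s : Bool, α = (2 * rsgn s) • stdB n i}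

/-- Nonnegative real linear combinations of elements of `S`. -/
def nnSpan {n : ℕ} (S : Set (Fin n → ℝ)) : Set (Fin n → ℝ) :=
  {x | ∃ (r : ℕ) (c : Fin r → ℝ) (β : Fin r → (Fin n → ℝ)),
    (∀ m, 0 ≤ c m) ∧ (∀ m, β m ∈ S) ∧ x = ∑ m, c m • β m}

/-- A signed poset: a subset of `Φ_{B_n}`, antisymmetric and closed under positive
linear combinations remaining in `Φ_{B_n}`. -/
def IsSignedPoset (n : ℕ) (P : Set (Fin n → ℝ)) : Prop :=
  P ⊆ BnRoots n ∧ (∀ α ∈ P, -α ∉ P) ∧ ∀ α ∈ BnRoots n, α ∈ nnSpan P → α ∈ P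

/-- A `C_n`-signed poset. -/
def IsCnSignedPoset (n : ℕ) (Q : Set (Fin n → ℝ)) : Prop :=
  Q ⊆ CnRoots n ∧ (∀ α ∈ Q, -α ∉ Q) ∧ ∀ α ∈ CnRoots n, α ∈ nnSpan Q → α ∈ Q

/-- The root cone `K^rt_P`. -/
def rootCone {n : ℕ} (P : Set (Fin n → ℝ)) : Set (Fin n → ℝ) := nnSpan P

/-- The weight cone `K^wt_P`. -/
def weightCone {n : ℕ} (P : Set (Fin n → ℝ)) : Set (Fin n → ℝ) :=
  {f | ∀ α ∈ P, 0 ≤ dotR f α}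

/-- The Fischer (strict) order on `±[n] ∪ {0}`:
`a < b` iff `v(a) - v(b) ∈ P`, or (`b = -a ≠ 0` and `v(a) ∈ P`). -/
def fLT {n : ℕ} (P : Set (Fin n → ℝ)) (a b : Option (SIdx n)) : Prop :=
  vO a - vO b ∈ P ∨ (a ≠ none ∧ b = negO a ∧ vO a ∈ P)

/-- A subset of `±[n]` is isotropic if it contains no pair `{i, -i}`. -/
def Isotropic {n : ℕ} (J : Finset (SIdx n)) : Prop :=
  ∀ i : Fin n, ¬((true, i) ∈ J ∧ (false, i) ∈ J)

/-- Signed characteristic vector of a subset of `±[n]`. -/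
def chiF {n : ℕ} (J : Finset (SIdx n)) : Fin n → ℝ := fun i =>
  if (true, i) ∈ J then 1 else if (false, i) ∈ J then -1 else 0

/-- `J` is an ideal of the signed poset `P`. -/
def IsIdeal {n : ℕ} (P : Set (Fin n → ℝ)) (J : Finset (SIdx n)) : Prop :=
  Isotropic J ∧ ∀ α ∈ P, 0 ≤ dotR (chiF J) α

/-- Comparability in the Fischer order of `P`. -/
def fComp {n : ℕ} (P : Set (Fin n → ℝ)) (a b : SIdx n) : Prop :=
  fLT P (some a) (some b) ∨ fLT P (some b) (some a)

/-- One step in the comparability graph on a subset `J` of `±[n]`. -/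
def connStep {n : ℕ} (P : Set (Fin n → ℝ)) (J : Finset (SIdx n)) (a b : SIdx n) : Prop :=
  a ∈ J ∧ b ∈ J ∧ fComp P a b

/-- `J` is connected: nonempty, and any two of its elements are joined by a path inside `J`
in the comparability graph of the Fischer order of `P`. -/
def IsConnectedIdl {n : ℕ} (P : Set (Fin n → ℝ)) (J : Finset (SIdx n)) : Prop :=
  J.Nonempty ∧ ∀ a ∈ J, ∀ b ∈ J, Relation.ReflTransGen (connStep P J) a b

/-- A connected ideal of `P`. -/
def IsConnIdeal {n : ℕ} (P : Set (Fin n → ℝ)) (J : Finset (SIdx n)) : Prop :=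
  IsIdeal P J ∧ IsConnectedIdl P J

/-- Support `supp J = {|a| : a ∈ J}`. -/
def suppF {n : ℕ} (J : Finset (SIdx n)) : Finset (Fin n) := J.image Prod.snd

/-- `J` and `K` intersect nontrivially. -/
def NontrivInter {n : ℕ} (J K : Finset (SIdx n)) : Prop :=
  (suppF J ∩ suppF K).Nonempty ∧ ¬J ⊆ K ∧ ¬K ⊆ J

/-- `J` and `K` intersect trivially. -/
def TrivInter {n : ℕ} (J K : Finset (SIdx n)) : Prop := ¬NontrivInter J K

/-- A signed permutation, as an anti-symmetric bijection of `±[n]`. -/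
def IsSPerm {n : ℕ} (w : SIdx n ≃ SIdx n) : Prop := ∀ a, w (negS a) = negS (w a)

/-- Linear action of a signed permutation on `ℝ^n`, determined by `w(e_i) = v(w(+i))`. -/
def spAct {n : ℕ} (w : SIdx n ≃ SIdx n) (x : Fin n → ℝ) : Fin n → ℝ :=
  ∑ i, x i • vS (w (true, i))

/-- `w` is a linear extension of `P`: a signed permutation with `P ⊆ w(Φ⁺_{B_n})`. -/
def IsLinExt {n : ℕ} (P : Set (Fin n → ℝ)) (w : SIdx n ≃ SIdx n) : Prop :=
  IsSPerm w ∧ ∀ α ∈ P, ∃ β ∈ BnPos n, α = spAct w β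

/-- The (finite) set `𝓛(P)` of linear extensions of `P`. -/
def linExts (n : ℕ) (P : Set (Fin n → ℝ)) : Finset (SIdx n ≃ SIdx n) :=
  Finset.univ.filter (IsLinExt P)

/-- Simple roots of `Φ_{B_n}`: `α_i = e_i - e_{i+1}` for `i < n - 1`, `α_{n-1} = e_{n-1}`
(0-indexed). -/
def simpleRoot (n : ℕ) (i : Fin n) : Fin n → ℝ := fun j =>
  (if j = i then (1 : ℝ) else 0) - if (j : ℕ) = (i : ℕ) + 1 then 1 else 0

/-- `J^w_m = {w(1), …, w(m)}` (0-indexed: the images under `w` of `+1, …, +(m+1)`). -/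
def JwSet {n : ℕ} (w : SIdx n ≃ SIdx n) (m : Fin n) : Finset (SIdx n) :=
  (Finset.univ.filter (fun j : Fin n => j ≤ m)).image (fun j => w (true, j))

/-- An extensible ideal of `P`. -/
def Extensible (n : ℕ) (P : Set (Fin n → ℝ)) (J : Finset (SIdx n)) : Prop :=
  ∃ I : Finset (SIdx n), I.Nonempty ∧ Disjoint I J ∧
    IsIdeal P (J ∪ I) ∧ IsIdeal P (J ∪ I.image negS)

/-- The finite set `J_conn(P)` of connected ideals of `P`. -/
def JconnF (n : ℕ) (P : Set (Fin n → ℝ)) : Finset (Finset (SIdx n)) :=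
  Finset.univ.filter (IsConnIdeal P)

/-- Membership in `Π(P)`: an unordered pair of nontrivially intersecting connected ideals. -/
def inPiP {n : ℕ} (P : Set (Fin n → ℝ)) (p : Sym2 (Finset (SIdx n))) : Prop :=
  ∃ J K : Finset (SIdx n),
    p = s(J, K) ∧ IsConnIdeal P J ∧ IsConnIdeal P K ∧ NontrivInter J K

/-- The finite set `Π(P)` of unordered pairs of nontrivially intersecting connected ideals. -/
def PiP (n : ℕ) (P : Set (Fin n → ℝ)) : Finset (Sym2 (Finset (SIdx n))) :=
  Finset.univ.filter (inPiP P)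

/-- No connected ideal of `P` intersects two or more other connected ideals nontrivially. -/
def NoDoubleNontriv (n : ℕ) (P : Set (Fin n → ℝ)) : Prop :=
  ∀ J K K' : Finset (SIdx n), IsConnIdeal P J → IsConnIdeal P K → IsConnIdeal P K' →
    NontrivInter J K → NontrivInter J K' → K = K'

/-- The connected component of `a` inside `J` (w.r.t. the Fischer comparability graph). -/
def componentIn {n : ℕ} (P : Set (Fin n → ℝ)) (J : Finset (SIdx n)) (a : SIdx n) :
    Finset (SIdx n) :=
  J.filter (fun b => Relation.ReflTransGen (connStep P J) a b)

/-- The set of connected components of `J`. -/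
def componentsOf {n : ℕ} (P : Set (Fin n → ℝ)) (J : Finset (SIdx n)) :
    Finset (Finset (SIdx n)) :=
  J.image (componentIn P J)

/-- The signed support `supp±(f) = {sgn(f_i)·i : f_i ≠ 0}` of a vector `f ∈ ℝ^n`. -/
def suppPM {n : ℕ} (f : Fin n → ℝ) : Finset (SIdx n) :=
  Finset.univ.filter (fun a : SIdx n => if a.1 then 0 < f a.2 else f a.2 < 0)

/-- Index type for the variables `U_J`, `J` a connected ideal of `P`. -/
abbrev ConnIdx (n : ℕ) (P : Set (Fin n → ℝ)) := {J : Finset (SIdx n) // IsConnIdeal P J}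

/-- Integer signed characteristic vector, as an exponent vector for Laurent monomials. -/
def chiZ {n : ℕ} (J : Finset (SIdx n)) : Fin n →₀ ℤ :=
  Finsupp.equivFunOnFinite.symm (fun i =>
    if (true, i) ∈ J then 1 else if (false, i) ∈ J then -1 else 0)

/-- The map `φ : k[U_J : J ∈ J_conn(P)] → k[x_1^{±1}, …, x_n^{±1}]`, `U_J ↦ x^{χ_J}`. -/
def phiWt (n : ℕ) (P : Set (Fin n → ℝ)) (k : Type) [Field k] :
    MvPolynomial (ConnIdx n P) k →ₐ[k] AddMonoidAlgebra k (Fin n →₀ ℤ) :=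
  MvPolynomial.aeval (fun J => AddMonoidAlgebra.single (chiZ J.val) 1)

/-- The binomial `syz(U_J, U_K) = U_J U_K - (∏_A U_A) (∏_B U_B)`, where `A` runs over the
connected components of `J ∩ K` and `B` over the connected components of `supp±(χ_J + χ_K)`. -/
def syzPoly (n : ℕ) (P : Set (Fin n → ℝ)) (k : Type) [Field k] (J K : ConnIdx n P) :
    MvPolynomial (ConnIdx n P) k :=
  MvPolynomial.X J * MvPolynomial.X K -
    (∏ A ∈ Finset.univ.filter
        (fun A : ConnIdx n P => (A : Finset (SIdx n)) ∈ componentsOf P (J.val ∩ K.val)),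
        MvPolynomial.X A) *
      ∏ B ∈ Finset.univ.filter
        (fun B : ConnIdx n P =>
          (B : Finset (SIdx n)) ∈ componentsOf P (suppPM (chiF J.val + chiF K.val))),
        MvPolynomial.X B

/-- `θ_1, …, θ_r` is a regular sequence: the ideal it generates is proper, and each `θ_{m+1}`
is a non-zero-divisor modulo the ideal generated by `θ_1, …, θ_m`. -/
def IsRegSeq {R : Type} [CommRing R] {r : ℕ} (θ : Fin r → R) : Prop :=
  Ideal.span (Set.range θ) ≠ ⊤ ∧
    ∀ (m : ℕ) (hm : m < r) (x : R),
      θ ⟨m, hm⟩ * x ∈ Ideal.span (θ '' {j : Fin r | (j : ℕ) < m}) →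
        x ∈ Ideal.span (θ '' {j : Fin r | (j : ℕ) < m})

/-- The induced signed poset `P_A = P ∩ span_ℝ{e_i : i ∈ A}`. -/
def inducedPoset (n : ℕ) (P : Set (Fin n → ℝ)) (A : Finset (Fin n)) : Set (Fin n → ℝ) :=
  {α | α ∈ P ∧ α ∈ Submodule.span ℝ (stdB n '' (A : Set (Fin n)))}

/-- The major index of a signed permutation. -/
def majB {n : ℕ} (w : SIdx n ≃ SIdx n) : ℕ :=
  ∑ i ∈ Finset.univ.filter
      (fun i : Fin n => spAct w (simpleRoot n i) ∉ BnPos n), ((i : ℕ) + 1)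

/-- `[m]_q = 1 + q + ⋯ + q^{m-1}` in `ℤ[q]`. -/
def qInt (m : ℕ) : Polynomial ℤ := ∑ t ∈ Finset.range m, Polynomial.X ^ t

/-- The symmetric function `{J, K} ↦ ⟨x, χ_J + χ_K⟩` on unordered pairs. -/
def pairDot {n : ℕ} (x : Fin n → ℝ) : Sym2 (Finset (SIdx n)) → ℝ :=
  Sym2.lift ⟨fun J K => dotR x (chiF J + chiF K),
    fun J K => congrArg (dotR x) (add_comm (chiF J) (chiF K))⟩

/-- The symmetric function `{J, K} ↦ [|J| + |K|]_q` on unordered pairs. -/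
def pairQ {n : ℕ} : Sym2 (Finset (SIdx n)) → Polynomial ℤ :=
  Sym2.lift ⟨fun J K => qInt (J.card + K.card),
    fun J K => congrArg qInt (Nat.add_comm J.card K.card)⟩

/-- The principal order ideal `I_≤(a)` in the Fischer order restricted to `±[n]`. -/
def Ile {n : ℕ} (P : Set (Fin n → ℝ)) (a : SIdx n) : Set (SIdx n) :=
  {b | b = a ∨ fLT P (some b) (some a)}

/-- A set of signed indices is isotropic if it contains no pair `{i, -i}`. -/
def IsoSet {n : ℕ} (S : Set (SIdx n)) : Prop :=
  ∀ i : Fin n, ¬((true, i) ∈ S ∧ (false, i) ∈ S)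

/-- A covering pair of the Fischer order of `P`. -/
def CovPair {n : ℕ} (P : Set (Fin n → ℝ)) (a b : Option (SIdx n)) : Prop :=
  fLT P a b ∧ ¬∃ c : Option (SIdx n), fLT P a c ∧ fLT P c b

/-- The set of covering roots of `P`. -/
def covRoots {n : ℕ} (P : Set (Fin n → ℝ)) : Set (Fin n → ℝ) :=
  {x | ∃ a b : Option (SIdx n), CovPair P a b ∧ x = vO a - vO b}

/-- The set `J_ε = {i : ε_i = 1} ∪ {-i : ε_i = -1}` attached to a `{-1,0,1}`-vector. -/
def Jeps {n : ℕ} (ε : Fin n → ℝ) : Set (SIdx n) :=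
  {a | (a.1 = true ∧ ε a.2 = 1) ∨ (a.1 = false ∧ ε a.2 = -1)}


/-- Signed evaluation. -/
def evS {n : ℕ} (f : Fin n → ℝ) (a : SIdx n) : ℝ := rsgn a.1 * f a.2

lemma dotR_vS {n : ℕ} (f : Fin n → ℝ) (a : SIdx n) : dotR f (vS a) = evS f a := by
  simp [dotR, vS, stdB, evS, Pi.single_apply, mul_comm]

lemma dotR_sub {n : ℕ} (f x y : Fin n → ℝ) : dotR f (x - y) = dotR f x - dotR f y := by
  simp [dotR, mul_sub, Finset.sum_sub_distrib]

lemma dotR_add_left {n : ℕ} (f g x : Fin n → ℝ) : dotR (f + g) x = dotR f x + dotR g x := by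
  simp [dotR, add_mul, Finset.sum_add_distrib]

lemma dotR_smul_left {n : ℕ} (c : ℝ) (f x : Fin n → ℝ) : dotR (c • f) x = c * dotR f x := by
  simp [dotR, Finset.mul_sum, mul_assoc]

lemma wc_add {n : ℕ} {P : Set (Fin n → ℝ)} {f g : Fin n → ℝ} (hf : f ∈ weightCone P)
    (hg : g ∈ weightCone P) : f + g ∈ weightCone P := fun α h => by
  rw [dotR_add_left]; exact add_nonneg (hf α h) (hg α h)

lemma wc_smul {n : ℕ} {P : Set (Fin n → ℝ)} {f : Fin n → ℝ} {c : ℝ} (hc : 0 ≤ c)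
    (hf : f ∈ weightCone P) : c • f ∈ weightCone P := fun α h => by
  rw [dotR_smul_left]; exact mul_nonneg hc (hf α h)

lemma wc_zero {n : ℕ} {P : Set (Fin n → ℝ)} : (0 : Fin n → ℝ) ∈ weightCone P := fun α _ => by
  simp [dotR]

lemma wc_sum {n : ℕ} {P : Set (Fin n → ℝ)} {ι : Type*} (S : Finset ι) (c : ι → ℝ)
    (w : ι → Fin n → ℝ) (hc : ∀ i ∈ S, 0 ≤ c i) (hw : ∀ i ∈ S, w i ∈ weightCone P) :
    ∑ i ∈ S, c i • w i ∈ weightCone P := by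
  induction S using Finset.induction_on with
  | empty => simpa using wc_zero
  | insert a S ha ih =>
    rw [Finset.sum_insert ha]
    exact wc_add (wc_smul (hc a (by simp)) (hw a (by simp)))
      (ih (fun i hi => hc i (by simp [hi])) (fun i hi => hw i (by simp [hi])))

lemma rsgn_not (s : Bool) : rsgn (!s) = -rsgn s := by cases s <;> simp [rsgn]

lemma evS_negS {n : ℕ} (f : Fin n → ℝ) (a : SIdx n) : evS f (negS a) = -evS f a := by
  simp [evS, negS, rsgn_not]

lemma vS_negS {n : ℕ} (a : SIdx n) : vS (negS a) = -vS a := by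
  simp [vS, negS, rsgn_not]

lemma negS_negS {n : ℕ} (a : SIdx n) : negS (negS a) = a := by
  simp [negS]

lemma mem_wc_iff {n : ℕ} {P : Set (Fin n → ℝ)} (hP : P ⊆ BnRoots n) (f : Fin n → ℝ) :
    f ∈ weightCone P ↔ (∀ a b : SIdx n, vS a - vS b ∈ P → evS f b ≤ evS f a) ∧
      (∀ a : SIdx n, vS a ∈ P → 0 ≤ evS f a) := by
  constructor
  · intro h
    refine ⟨fun a b hab => ?_, fun a ha => ?_⟩
    · have := h _ hab
      rw [dotR_sub, dotR_vS, dotR_vS] at this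
      linarith
    · have := h _ ha
      rwa [dotR_vS] at this
  · rintro ⟨h1, h2⟩ α hα
    rcases hP hα with ⟨i, j, -, s, t, rfl⟩ | ⟨i, s, rfl⟩
    · have e : rsgn s • stdB n i + rsgn t • stdB n j = vS (s, i) - vS (negS (t, j)) := by
        rw [vS_negS]; simp [vS]
      rw [e] at hα ⊢
      rw [dotR_sub, dotR_vS, dotR_vS]
      linarith [h1 _ _ hα]
    · have := h2 (s, i) hα
      rw [← dotR_vS] at this
      exact this

lemma evS_chiF {n : ℕ} {J : Finset (SIdx n)} (hJ : Isotropic J) (a : SIdx n) :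
    evS (chiF J) a = if a ∈ J then 1 else if negS a ∈ J then -1 else 0 := by
  obtain ⟨s, i⟩ := a
  have := hJ i
  cases s
  · by_cases h1 : (true, i) ∈ J <;> by_cases h2 : (false, i) ∈ J <;>
      simp_all [evS, chiF, rsgn, negS]
  · by_cases h1 : (true, i) ∈ J <;> by_cases h2 : (false, i) ∈ J <;>
      simp_all [evS, chiF, rsgn, negS]

lemma iso_neg {n : ℕ} {J : Finset (SIdx n)} (hJ : Isotropic J) {a : SIdx n} (ha : a ∈ J) :
    negS a ∉ J := by
  obtain ⟨s, i⟩ := a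
  have := hJ i
  cases s <;> simp_all [negS]

lemma iso_mono {n : ℕ} {J C : Finset (SIdx n)} (hJ : Isotropic J) (h : C ⊆ J) :
    Isotropic C := fun i hi => hJ i ⟨h hi.1, h hi.2⟩

lemma ideal_sub {n : ℕ} {P : Set (Fin n → ℝ)} (hP : P ⊆ BnRoots n) {J C : Finset (SIdx n)}
    (hJ : IsIdeal P J) (hC : C ⊆ J) (hcl : ∀ a ∈ C, ∀ b ∈ J, fComp P a b → b ∈ C) :
    IsIdeal P C := by
  have hCi := iso_mono hJ.1 hC
  refine ⟨hCi, ?_⟩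
  have hm : chiF J ∈ weightCone P := hJ.2
  rw [mem_wc_iff hP] at hm
  change chiF C ∈ weightCone P
  rw [mem_wc_iff hP]
  obtain ⟨h1, h2⟩ := hm
  constructor
  · intro a b hab
    have h := h1 a b hab
    have hab' : vS (negS b) - vS (negS a) ∈ P := by
      rw [vS_negS, vS_negS]; convert hab using 1; abel
    rw [evS_chiF hJ.1, evS_chiF hJ.1] at h
    have c1 : b ∈ C → a ∈ C := by
      intro hb
      have hbJ := hC hb
      have haJ : a ∈ J := by
        by_contra haJ
        simp only [hbJ, haJ, if_true, if_false] at h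
        split_ifs at h <;> linarith
      exact hcl b hb a haJ (Or.inr (Or.inl hab))
    have c2 : negS a ∈ C → negS b ∈ C := by
      intro hb
      have hbJ := hC hb
      have haJ : a ∉ J := fun h => iso_neg hJ.1 h hbJ
      have hbJ' : negS b ∈ J := by
        by_contra hn
        simp only [hbJ, haJ, hn, if_true, if_false] at h
        split_ifs at h <;> linarith
      exact hcl _ hb _ hbJ' (Or.inr (Or.inl hab'))
    rw [evS_chiF hCi, evS_chiF hCi]
    by_cases k1 : b ∈ C
    · simp [k1, c1 k1]
    · by_cases k2 : negS a ∈ C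
      · have : a ∉ C := fun h => iso_neg hCi h k2
        simp [k1, k2, c2 k2, this]
      · simp only [k1, k2, if_false]
        split_ifs <;> norm_num
  · intro a ha
    have h := h2 a ha
    rw [evS_chiF hJ.1] at h
    rw [evS_chiF hCi]
    have : negS a ∉ C := by
      intro hn
      have hn' := hC hn
      have haJ : a ∉ J := fun h => iso_neg hJ.1 h hn'
      simp only [hn', haJ, if_true, if_false] at h
      linarith
    simp only [this, if_false]
    split_ifs <;> norm_num

lemma chiF_split {n : ℕ} {J C : Finset (SIdx n)} (hJ : Isotropic J) (hC : C ⊆ J) :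
    chiF J = chiF C + chiF (J \ C) := by
  ext i
  have := hJ i
  have h1 := @hC (true, i)
  have h2 := @hC (false, i)
  simp only [chiF, Pi.add_apply, Finset.mem_sdiff]
  by_cases a1 : (true, i) ∈ J <;> by_cases a2 : (false, i) ∈ J <;>
    by_cases a3 : (true, i) ∈ C <;> by_cases a4 : (false, i) ∈ C <;> simp_all

/-- Nonnegative combinations of `chiF J`, `J ∈ S`. -/
def GenS {n : ℕ} (S : Finset (Finset (SIdx n))) (f : Fin n → ℝ) : Prop :=
  ∃ c : Finset (SIdx n) → ℝ, (∀ J, 0 ≤ c J) ∧ f = ∑ J ∈ S, c J • chiF J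

lemma GenS.zero {n : ℕ} {S : Finset (Finset (SIdx n))} : GenS S 0 :=
  ⟨fun _ => 0, fun _ => le_rfl, by simp⟩

lemma GenS.add {n : ℕ} {S : Finset (Finset (SIdx n))} {f g : Fin n → ℝ} (hf : GenS S f)
    (hg : GenS S g) : GenS S (f + g) := by
  obtain ⟨c, hc, rfl⟩ := hf
  obtain ⟨d, hd, rfl⟩ := hg
  exact ⟨fun J => c J + d J, fun J => add_nonneg (hc J) (hd J), by
    simp [add_smul, Finset.sum_add_distrib]⟩

lemma GenS.smul {n : ℕ} {S : Finset (Finset (SIdx n))} {f : Fin n → ℝ} {t : ℝ} (ht : 0 ≤ t)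
    (hf : GenS S f) : GenS S (t • f) := by
  obtain ⟨c, hc, rfl⟩ := hf
  exact ⟨fun J => t * c J, fun J => mul_nonneg ht (hc J), by
    simp [mul_smul, Finset.smul_sum]⟩

lemma GenS.mem {n : ℕ} {S : Finset (Finset (SIdx n))} {J : Finset (SIdx n)} (hJ : J ∈ S) :
    GenS S (chiF J) :=
  ⟨fun K => if K = J then 1 else 0, fun K => by dsimp only; split_ifs <;> norm_num, by simp [hJ]⟩

lemma GenS.sum {n : ℕ} {S : Finset (Finset (SIdx n))} {ι : Type*} (T : Finset ι) (c : ι → ℝ)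
    (w : ι → Fin n → ℝ) (hc : ∀ i ∈ T, 0 ≤ c i) (hw : ∀ i ∈ T, GenS S (w i)) :
    GenS S (∑ i ∈ T, c i • w i) := by
  induction T using Finset.induction_on with
  | empty => simpa using GenS.zero
  | insert a S ha ih =>
    rw [Finset.sum_insert ha]
    exact GenS.add (GenS.smul (hc a (by simp)) (hw a (by simp)))
      (ih (fun i hi => hc i (by simp [hi])) (fun i hi => hw i (by simp [hi])))

lemma fComp_symm {n : ℕ} {P : Set (Fin n → ℝ)} {a b : SIdx n} (h : fComp P a b) :
    fComp P b a := Or.symm h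

lemma connStep_symm {n : ℕ} {P : Set (Fin n → ℝ)} {J : Finset (SIdx n)} :
    Std.Symm (connStep P J) := ⟨fun _ _ h => ⟨h.2.1, h.1, fComp_symm h.2.2⟩⟩

lemma comp_conn {n : ℕ} {P : Set (Fin n → ℝ)} {J : Finset (SIdx n)} {a : SIdx n} (ha : a ∈ J) :
    IsConnectedIdl P (componentIn P J a) := by
  have hmem : a ∈ componentIn P J a := by
    simp [componentIn, ha, Relation.ReflTransGen.refl]
  refine ⟨⟨a, hmem⟩, ?_⟩
  have key : ∀ b, Relation.ReflTransGen (connStep P J) a b →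
      Relation.ReflTransGen (connStep P (componentIn P J a)) a b := by
    intro b hb
    induction hb with
    | refl => exact .refl
    | tail h1 h2 ih =>
      refine ih.tail ⟨?_, ?_, h2.2.2⟩
      · simp only [componentIn, Finset.mem_filter]; exact ⟨h2.1, h1⟩
      · simp only [componentIn, Finset.mem_filter]; exact ⟨h2.2.1, h1.tail h2⟩
  intro b hb c hc
  simp only [componentIn, Finset.mem_filter] at hb hc
  haveI := connStep_symm (P := P) (J := componentIn P J a)
  exact (Relation.ReflTransGen.stdSymm.symm _ _ (key b hb.2)).trans (key c hc.2)

lemma ideal_gen {n : ℕ} {P : Set (Fin n → ℝ)} (hP : P ⊆ BnRoots n) :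
    ∀ (m : ℕ) (J : Finset (SIdx n)), J.card ≤ m → IsIdeal P J → GenS (JconnF n P) (chiF J) := by
  intro m
  induction m with
  | zero =>
    intro J hJ _
    have : J = ∅ := by simpa using hJ
    subst this
    convert GenS.zero using 1
    ext i; simp [chiF]
  | succ m ih =>
    intro J hJc hJ
    rcases J.eq_empty_or_nonempty with rfl | ⟨a, ha⟩
    · exact ih _ (by simp) hJ
    have hsub : componentIn P J a ⊆ J := Finset.filter_subset _ _
    have hmem : a ∈ componentIn P J a := by
      simp [componentIn, ha, Relation.ReflTransGen.refl]
    have hcl : ∀ x ∈ componentIn P J a, ∀ b ∈ J, fComp P x b → b ∈ componentIn P J a := by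
      intro x hx b hb h
      simp only [componentIn, Finset.mem_filter] at hx ⊢
      exact ⟨hb, hx.2.tail ⟨hx.1, hb, h⟩⟩
    rw [chiF_split hJ.1 hsub]
    refine GenS.add (GenS.mem ?_) (ih _ ?_ ?_)
    · simp only [JconnF, Finset.mem_filter, Finset.mem_univ, true_and]
      exact ⟨ideal_sub hP hJ hsub hcl, comp_conn ha⟩
    · have : (J \ componentIn P J a).card < J.card := by
        apply Finset.card_lt_card
        refine ⟨Finset.sdiff_subset, fun h => ?_⟩
        have := h ha
        simp [hmem] at this
      omega
    · refine ideal_sub hP hJ Finset.sdiff_subset ?_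
      intro x hx b hb h
      simp only [Finset.mem_sdiff] at hx ⊢
      exact ⟨hb, fun hbc => hx.2 (hcl b hbc x hx.1 (fComp_symm h))⟩

/-- Real sign. -/
def sg (x : ℝ) : ℝ := if 0 < x then 1 else if x < 0 then -1 else 0

lemma sg_neg (x : ℝ) : sg (-x) = -sg x := by
  unfold sg
  split_ifs <;> first | linarith | norm_num

lemma sg_mono {x y : ℝ} (h : x ≤ y) : sg x ≤ sg y := by
  unfold sg
  split_ifs <;> first | linarith | norm_num

lemma sg_nonneg {x : ℝ} (h : 0 ≤ x) : 0 ≤ sg x := by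
  unfold sg
  split_ifs <;> first | linarith | norm_num

lemma evS_map {n : ℕ} (φ : ℝ → ℝ) (hφ : ∀ x, φ (-x) = -φ x) (f : Fin n → ℝ) (a : SIdx n) :
    evS (fun i => φ (f i)) a = φ (evS f a) := by
  obtain ⟨s, i⟩ := a
  cases s <;> simp [evS, rsgn, hφ]

lemma iso_suppPM {n : ℕ} (f : Fin n → ℝ) : Isotropic (suppPM f) := by
  intro i hi
  simp [suppPM] at hi
  linarith

lemma chiF_suppPM {n : ℕ} (f : Fin n → ℝ) : chiF (suppPM f) = fun i => sg (f i) := by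
  ext i
  simp [chiF, suppPM, sg]

lemma supp_ideal {n : ℕ} {P : Set (Fin n → ℝ)} (hP : P ⊆ BnRoots n) {f : Fin n → ℝ}
    (hf : f ∈ weightCone P) : IsIdeal P (suppPM f) := by
  refine ⟨iso_suppPM f, ?_⟩
  change chiF (suppPM f) ∈ weightCone P
  rw [mem_wc_iff hP] at hf ⊢
  rw [chiF_suppPM]
  simp only [evS_map sg sg_neg]
  exact ⟨fun a b h => sg_mono (hf.1 a b h), fun a h => sg_nonneg (hf.2 a h)⟩

lemma wc_gen {n : ℕ} {P : Set (Fin n → ℝ)} (hP : P ⊆ BnRoots n) :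
    ∀ (m : ℕ) (f : Fin n → ℝ), (Finset.univ.filter (fun i => f i ≠ 0)).card ≤ m →
      f ∈ weightCone P → GenS (JconnF n P) f := by
  intro m
  induction m with
  | zero =>
    intro f hf _
    have : f = 0 := by
      ext i
      by_contra hi
      have hm : i ∈ Finset.univ.filter (fun i => f i ≠ 0) :=
        Finset.mem_filter.mpr ⟨Finset.mem_univ i, hi⟩
      have := Finset.card_pos.mpr ⟨i, hm⟩
      omega
    rw [this]; exact GenS.zero
  | succ m ih =>
    intro f hfc hf
    rcases (Finset.univ.filter (fun i => f i ≠ 0)).eq_empty_or_nonempty with h0 | hne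
    · exact ih f (by rw [h0]; simp) hf
    obtain ⟨k, hk, hmin⟩ := Finset.exists_min_image _ (fun i => |f i|) hne
    simp only [Finset.mem_filter, Finset.mem_univ, true_and] at hk hmin
    set t := |f k| with ht
    have htp : 0 < t := abs_pos.mpr hk
    let φ : ℝ → ℝ := fun x => x - t * sg x
    have hφ : ∀ x, φ (-x) = -φ x := fun x => by simp only [φ, sg_neg]; ring
    have e : f = t • chiF (suppPM f) + fun i => φ (f i) := by
      rw [chiF_suppPM]; ext i; simp [φ]
    have hev : ∀ a, evS f a = 0 ∨ t ≤ evS f a ∨ evS f a ≤ -t := by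
      rintro ⟨s, i⟩
      by_cases h : f i = 0
      · left; simp [evS, h]
      · have := hmin i h
        right
        rcases le_abs.mp this with h | h <;> cases s <;> simp [evS, rsgn]
        · right; linarith
        · left; linarith
        · left; linarith
        · right; linarith
    rw [e]
    refine GenS.add (GenS.smul htp.le (ideal_gen hP _ _ le_rfl (supp_ideal hP hf))) (ih _ ?_ ?_)
    · have : (Finset.univ.filter (fun i => φ (f i) ≠ 0)).card <
          (Finset.univ.filter (fun i => f i ≠ 0)).card := by
        apply Finset.card_lt_card
        rw [Finset.ssubset_iff_of_subset]
        · refine ⟨k, by simpa using hk, ?_⟩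
          simp only [Finset.mem_filter, Finset.mem_univ, true_and, not_not, φ, ht, sg]
          rcases lt_or_gt_of_ne hk with h | h
          · simp [h, h.not_gt, abs_of_neg h]
          · simp [h, abs_of_pos h]
        · intro i
          simp only [Finset.mem_filter, Finset.mem_univ, true_and]
          intro h1 h2
          exact h1 (by simp [φ, h2, sg])
      omega
    · rw [mem_wc_iff hP] at hf ⊢
      simp only [evS_map φ hφ]
      constructor
      · intro a b hab
        have h := hf.1 a b hab
        have h1 := hev a
        have h2 := hev b
        generalize evS f a = x at *
        generalize evS f b = y at *
        simp only [φ, sg]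
        rcases h1 with h1 | h1 | h1 <;> rcases h2 with h2 | h2 | h2 <;> split_ifs <;> linarith
      · intro a hab
        have h := hf.2 a hab
        have h1 := hev a
        generalize evS f a = x at *
        simp only [φ, sg]
        rcases h1 with h1 | h1 | h1 <;> split_ifs <;> linarith

/-- Extreme vectors. -/
def Extr {n : ℕ} (P : Set (Fin n → ℝ)) (v : Fin n → ℝ) : Prop :=
  ∀ a ∈ weightCone P, ∀ b ∈ weightCone P, v = a + b →
          (∃ c : ℝ, 0 ≤ c ∧ a = c • v) ∧ ∃ c : ℝ, 0 ≤ c ∧ b = c • v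

lemma Extr.smul {n : ℕ} {P : Set (Fin n → ℝ)} {v : Fin n → ℝ} (h : Extr P v) {t : ℝ}
    (ht : 0 < t) : Extr P (t • v) := by
  intro a ha b hb hab
  have hti : 0 ≤ t⁻¹ := by positivity
  obtain ⟨⟨c, hc, h1⟩, ⟨d, hd, h2⟩⟩ := h _ (wc_smul hti ha) _ (wc_smul hti hb) (by
    rw [← smul_add, ← hab, smul_smul, inv_mul_cancel₀ ht.ne', one_smul])
  refine ⟨⟨c, hc, ?_⟩, ⟨d, hd, ?_⟩⟩
  · rw [smul_comm, ← h1, smul_smul, mul_inv_cancel₀ ht.ne', one_smul]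
  · rw [smul_comm, ← h2, smul_smul, mul_inv_cancel₀ ht.ne', one_smul]

lemma chiF_ne_zero {n : ℕ} {J : Finset (SIdx n)} (hJ : Isotropic J) (hne : J.Nonempty) :
    chiF J ≠ 0 := by
  obtain ⟨a, ha⟩ := hne
  intro h
  have := evS_chiF hJ a
  rw [h] at this
  simp [evS, ha] at this

lemma extr_nonext {n : ℕ} {P : Set (Fin n → ℝ)} {J : Finset (SIdx n)} (hJ : IsConnIdeal P J)
    (hE : Extr P (chiF J)) : ¬ Extensible n P J := by
  rintro ⟨I, ⟨x, hx⟩, hd, h1, h2⟩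
  have hxJ : x ∉ J := fun h => Finset.disjoint_left.mp hd hx h
  have hnJ : negS x ∉ J := fun h => iso_neg h1.1
    (Finset.mem_union_right _ hx) (Finset.mem_union_left _ h)
  have e : chiF J = (1 / 2 : ℝ) • chiF (J ∪ I) + (1 / 2 : ℝ) • chiF (J ∪ I.image negS) := by
    ext i
    have n1 := h1.1 i
    have n2 := h2.1 i
    have m1 : (true, i) ∈ I.image negS ↔ (false, i) ∈ I := by
      simp [negS]
    have m2 : (false, i) ∈ I.image negS ↔ (true, i) ∈ I := by
      simp [negS]
    have d1 : (true, i) ∈ I → (true, i) ∉ J := fun h => Finset.disjoint_left.mp hd h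
    have d2 : (false, i) ∈ I → (false, i) ∉ J := fun h => Finset.disjoint_left.mp hd h
    simp only [chiF, Pi.add_apply, Pi.smul_apply, Finset.mem_union, m1, m2, smul_eq_mul] at *
    by_cases a1 : (true, i) ∈ J <;> by_cases a2 : (false, i) ∈ J <;>
    by_cases a3 : (true, i) ∈ I <;> by_cases a4 : (false, i) ∈ I <;>
      simp_all <;> norm_num
  obtain ⟨⟨c, -, hc⟩, -⟩ := hE _ (wc_smul (by norm_num) h1.2) _ (wc_smul (by norm_num) h2.2) e
  have := congrArg (fun f => evS f x) hc
  have hs : ∀ (r : ℝ) (f : Fin n → ℝ), evS (r • f) x = r * evS f x := by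
    intro r f; simp [evS]; ring
  simp only [hs, evS_chiF hJ.1.1, evS_chiF h1.1] at this
  simp [hxJ, hnJ, hx] at this

lemma suppPM_add {n : ℕ} {J : Finset (SIdx n)} (hJ : Isotropic J) {M : ℝ} (hM : 0 < M)
    {h : Fin n → ℝ} (hh : ∀ y ∈ J, h y.2 = 0) :
    suppPM (M • chiF J + h) = J ∪ suppPM h := by
  ext ⟨s, i⟩
  have k1 := hh (true, i)
  have k2 := hh (false, i)
  have k3 := hJ i
  have k4 := hM.not_gt
  clear hh hJ
  by_cases a1 : (true, i) ∈ J
  · have a2 : (false, i) ∉ J := fun h => k3 ⟨a1, h⟩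
    have := k1 a1
    simp only at this
    cases s <;> simp [suppPM, chiF, a1, a2, this, hM, k4, hM.le]
  · by_cases a2 : (false, i) ∈ J
    · have := k2 a2
      simp only at this
      cases s <;> simp [suppPM, chiF, a1, a2, this, hM, k4, hM.le]
    · cases s <;> simp [suppPM, chiF, a1, a2]

lemma nonext_extr {n : ℕ} {P : Set (Fin n → ℝ)} (hP : P ⊆ BnRoots n)
    (hpt : ∀ f : Fin n → ℝ, f ∈ weightCone P → -f ∈ weightCone P → f = 0)
    {J : Finset (SIdx n)} (hJ : IsConnIdeal P J)
    (hE : ¬ Extensible n P J) : Extr P (chiF J) := by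
  have main : ∀ a ∈ weightCone P, ∀ b ∈ weightCone P, chiF J = a + b →
      ∃ c : ℝ, 0 ≤ c ∧ a = c • chiF J := by
    intro a ha b hb hab
    have ha' := (mem_wc_iff hP a).1 ha
    have hb' := (mem_wc_iff hP b).1 hb
    have hadd : ∀ x, evS a x + evS b x = evS (chiF J) x := by
      intro x; rw [hab]; simp [evS]; ring
    have lt_eq : ∀ x ∈ J, ∀ y ∈ J, fLT P (some x) (some y) → evS a x = evS a y := by
      intro x hx y hy h
      rcases h with h | ⟨-, h, -⟩
      · have h1 := ha'.1 x y h
        have h2 := hb'.1 x y h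
        have h3 := hadd x
        have h4 := hadd y
        rw [evS_chiF hJ.1.1] at h3 h4
        simp only [hx, hy, if_true] at h3 h4
        linarith
      · simp only [negO, Option.some.injEq] at h
        subst h
        exact absurd hy (iso_neg hJ.1.1 hx)
    obtain ⟨x0, hx0⟩ := hJ.2.1
    have hconst : ∀ y ∈ J, evS a y = evS a x0 := by
      intro y hy
      have := hJ.2.2 x0 hx0 y hy
      clear hy
      induction this with
      | refl => rfl
      | tail _ h2 ih =>
        rw [← ih]
        rcases h2.2.2 with h | h
        · exact (lt_eq _ h2.1 _ h2.2.1 h).symm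
        · exact lt_eq _ h2.2.1 _ h2.1 h
    set c := evS a x0 with hc
    set g : Fin n → ℝ := a - c • chiF J with hg
    have hχ : chiF J ∈ weightCone P := hJ.1.2
    have hgJ : ∀ y ∈ J, g y.2 = 0 := by
      intro y hy
      have h1 := hconst y hy
      have h2 := evS_chiF hJ.1.1 y
      simp only [hy, if_true] at h2
      obtain ⟨s, i⟩ := y
      cases s <;> simp [evS, rsgn, hg] at h1 h2 ⊢
      · have h3 : chiF J i = -1 := by linarith
        rw [h3]; linarith
      · rw [h2, h1]; ring
    -- positive multiples
    set M : ℝ := |c| + |1 - c| + 1 with hM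
    have hMp : 0 < M := by positivity
    have hp : M • chiF J + g ∈ weightCone P := by
      have : M • chiF J + g = a + (M - c) • chiF J := by
        rw [hg, sub_smul]; abel
      rw [this]
      exact wc_add ha (wc_smul (by linarith [le_abs_self c, abs_nonneg (1 - c)]) hχ)
    have hm : M • chiF J - g ∈ weightCone P := by
      have : M • chiF J - g = b + (M - (1 - c)) • chiF J := by
        have hb : b = chiF J - a := by rw [hab]; abel
        rw [hg, hb, sub_smul, sub_smul, one_smul]; abel
      rw [this]
      exact wc_add hb (wc_smul (by linarith [le_abs_self (1 - c), abs_nonneg c]) hχ)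
    have hmemJ : ∀ (h : Fin n → ℝ), (∀ y ∈ J, h y.2 = 0) →
        suppPM (M • chiF J + h) = J ∪ suppPM h := by
      exact fun h hh => suppPM_add hJ.1.1 hMp hh
    have hneg : (suppPM g).image negS = suppPM (-g) := by
      ext ⟨s, i⟩
      cases s <;> simp [suppPM, negS]
    have hg0 : g = 0 := by
      by_contra hgn
      apply hE
      refine ⟨suppPM g, ?_, ?_, ?_, ?_⟩
      · obtain ⟨i, hi⟩ := Function.ne_iff.mp hgn
        simp only [Pi.zero_apply] at hi
        rcases lt_or_gt_of_ne hi with h | h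
        · exact ⟨(false, i), by simp [suppPM, h]⟩
        · exact ⟨(true, i), by simp [suppPM, h]⟩
      · rw [Finset.disjoint_left]
        rintro ⟨s, i⟩ h1 h2
        have := hgJ _ h2
        simp [suppPM] at h1 this
        simp [this] at h1
      · rw [← hmemJ g hgJ]; exact supp_ideal hP hp
      · rw [hneg, ← hmemJ (-g) (fun y hy => by simp [hgJ y hy])]
        apply supp_ideal hP
        rw [← sub_eq_add_neg]; exact hm
    have hac : a = c • chiF J := sub_eq_zero.mp hg0
    refine ⟨c, ?_, hac⟩
    by_contra hcn
    push Not at hcn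
    refine chiF_ne_zero hJ.1.1 hJ.2.1 (hpt _ hχ ?_)
    have : -chiF J = (-c)⁻¹ • a := by
      rw [hac, smul_smul, inv_neg, neg_mul, inv_mul_cancel₀ hcn.ne, neg_one_smul]
    rw [this]
    exact wc_smul (inv_nonneg.mpr (by linarith)) ha
  intro a ha b hb hab
  exact ⟨main a ha b hb hab, main b hb a ha (by rw [hab, add_comm])⟩

lemma term_zero {n : ℕ} {P : Set (Fin n → ℝ)}
    (hpt : ∀ f : Fin n → ℝ, f ∈ weightCone P → -f ∈ weightCone P → f = 0)
    {x y : Fin n → ℝ} (hx : x ∈ weightCone P) (hy : y ∈ weightCone P) (h : x + y = 0) :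
    x = 0 := by
  apply hpt x hx
  rw [neg_eq_of_add_eq_zero_right h]; exact hy

lemma exists_gen {n : ℕ} {P : Set (Fin n → ℝ)} (hP : P ⊆ BnRoots n)
    (hpt : ∀ f : Fin n → ℝ, f ∈ weightCone P → -f ∈ weightCone P → f = 0) :
    ∃ S : Finset (Finset (SIdx n)), (∀ J ∈ S, IsConnIdeal P J ∧ ¬ Extensible n P J) ∧
      ∀ f ∈ weightCone P, GenS S f := by
  let T := (Finset.univ : Finset (Finset (Finset (SIdx n)))).filter
    (fun S => S ⊆ JconnF n P ∧ ∀ f ∈ weightCone P, GenS S f)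
  have hT : T.Nonempty := ⟨JconnF n P, by
    simp only [T, Finset.mem_filter, Finset.mem_univ, true_and]
    exact ⟨Finset.Subset.refl _, fun f hf => wc_gen hP _ f le_rfl hf⟩⟩
  obtain ⟨S, hS, hmin⟩ := Finset.exists_min_image T Finset.card hT
  simp only [T, Finset.mem_filter, Finset.mem_univ, true_and] at hS hmin
  obtain ⟨hSsub, hSgen⟩ := hS
  have hconn : ∀ J ∈ S, IsConnIdeal P J := fun J hJ => by
    have := hSsub hJ
    simpa [JconnF] using this
  refine ⟨S, fun J hJ => ⟨hconn J hJ, extr_nonext (hconn J hJ) ?_⟩, hSgen⟩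
  have hnot : ¬ GenS (S.erase J) (chiF J) := by
    intro hg
    have := hmin (S.erase J) ⟨(Finset.erase_subset _ _).trans hSsub, fun f hf => by
      obtain ⟨c, hc, rfl⟩ := hSgen f hf
      refine GenS.sum S c _ (fun i _ => hc i) (fun K hK => ?_)
      by_cases hKJ : K = J
      · rw [hKJ]; exact hg
      · exact GenS.mem (Finset.mem_erase.mpr ⟨hKJ, hK⟩)⟩
    have := Finset.card_erase_lt_of_mem hJ
    omega
  intro a ha b hb hab
  obtain ⟨c, hc, rfl⟩ := hSgen a ha
  obtain ⟨d, hd, rfl⟩ := hSgen b hb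
  have hw : ∀ K ∈ S.erase J, chiF K ∈ weightCone P := fun K hK =>
    (hconn K (Finset.mem_of_mem_erase hK)).1.2
  have hχ : chiF J ∈ weightCone P := (hconn J hJ).1.2
  rw [← Finset.add_sum_erase S _ hJ, ← Finset.add_sum_erase S _ hJ] at hab
  rw [← Finset.add_sum_erase S _ hJ, ← Finset.add_sum_erase S _ hJ]
  set A := ∑ K ∈ S.erase J, c K • chiF K with hA
  set B := ∑ K ∈ S.erase J, d K • chiF K with hB
  have hAw : A ∈ weightCone P := wc_sum _ _ _ (fun i _ => hc i) hw
  have hBw : B ∈ weightCone P := wc_sum _ _ _ (fun i _ => hd i) hw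
  have hAg : GenS (S.erase J) A := ⟨c, hc, rfl⟩
  have hBg : GenS (S.erase J) B := ⟨d, hd, rfl⟩
  have hrel : (1 - c J - d J) • chiF J = A + B := by
    rw [sub_smul, sub_smul, one_smul]; nth_rewrite 1 [hab]; abel
  have hle : 1 - c J - d J ≤ 0 := by
    by_contra hpos
    push Not at hpos
    apply hnot
    have : chiF J = (1 - c J - d J)⁻¹ • (A + B) := by
      rw [← hrel, smul_smul, inv_mul_cancel₀ hpos.ne', one_smul]
    rw [this]
    exact GenS.smul (inv_nonneg.mpr hpos.le) (hAg.add hBg)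
  have hk : (c J + d J - 1) • chiF J ∈ weightCone P := wc_smul (by linarith) hχ
  have hz : A + (B + (c J + d J - 1) • chiF J) = 0 := by
    rw [← add_assoc, ← hrel, ← add_smul]
    ring_nf; simp
  have hA0 := term_zero hpt hAw (wc_add hBw hk) hz
  have hB0 := term_zero hpt hBw (wc_add hAw hk) (by rw [← hz]; abel)
  rw [hA0, hB0]
  exact ⟨⟨c J, hc J, by simp⟩, ⟨d J, hd J, by simp⟩⟩

theorem statement_9 (n : ℕ) (hn : 1 ≤ n) (P : Set (Fin n → ℝ)) (hP : IsSignedPoset n P)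
    (hpt : ∀ f : Fin n → ℝ, f ∈ weightCone P → -f ∈ weightCone P → f = 0) :
    weightCone P =
      nnSpan {x | ∃ J : Finset (SIdx n), IsConnIdeal P J ∧ ¬Extensible n P J ∧ x = chiF J} ∧
    ∀ v ∈ weightCone P, v ≠ 0 →
      ((∀ a ∈ weightCone P, ∀ b ∈ weightCone P, v = a + b →
          (∃ c : ℝ, 0 ≤ c ∧ a = c • v) ∧ ∃ c : ℝ, 0 ≤ c ∧ b = c • v) ↔
        ∃ J : Finset (SIdx n), IsConnIdeal P J ∧ ¬Extensible n P J ∧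
          ∃ c : ℝ, 0 < c ∧ v = c • chiF J) := by
  have hB := hP.1
  obtain ⟨S, hS, hgen⟩ := exists_gen hB hpt
  refine ⟨?_, ?_⟩
  · ext f
    constructor
    · intro hf
      obtain ⟨c, hc, hfc⟩ := hgen f hf
      let e := S.equivFin
      refine ⟨S.card, fun m => c (e.symm m).1, fun m => chiF (e.symm m).1, fun m => hc _,
        fun m => ⟨_, (hS _ (e.symm m).2).1, (hS _ (e.symm m).2).2, rfl⟩, ?_⟩
      rw [hfc, ← Finset.sum_coe_sort S]
      exact (Equiv.sum_comp e.symm (fun K : S => c K.1 • chiF K.1)).symm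
    · rintro ⟨r, c, β, hc, hβ, rfl⟩
      refine wc_sum _ _ _ (fun i _ => hc i) (fun i _ => ?_)
      obtain ⟨J, hJ, -, h⟩ := hβ i
      rw [h]; exact hJ.1.2
  · intro v hv hv0
    constructor
    · intro hE
      obtain ⟨c, hc, hvc⟩ := hgen v hv
      obtain ⟨J, hJ, hne⟩ : ∃ J ∈ S, c J • chiF J ≠ 0 := by
        by_contra hcon
        push Not at hcon
        exact hv0 (by rw [hvc]; exact Finset.sum_eq_zero hcon)
      have hcJ : 0 < c J := lt_of_le_of_ne (hc J) (fun h => hne (by rw [← h, zero_smul]))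
      rw [← Finset.add_sum_erase S _ hJ] at hvc
      obtain ⟨⟨d, hd, h⟩, -⟩ := hE _ (wc_smul (hc J) (hS J hJ).1.1.2) _
        (wc_sum _ _ _ (fun i _ => hc i)
          (fun K hK => (hS K (Finset.mem_of_mem_erase hK)).1.1.2)) hvc
      have hdp : 0 < d := lt_of_le_of_ne hd (fun h0 => hne (by rw [h, ← h0, zero_smul]))
      refine ⟨J, (hS J hJ).1, (hS J hJ).2, d⁻¹ * c J, by positivity, ?_⟩
      rw [mul_smul, h, smul_smul, inv_mul_cancel₀ hdp.ne', one_smul]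
    · rintro ⟨J, hJ, hJe, c, hc, rfl⟩
      exact (nonext_extr hB hpt hJ hJe).smul hc
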